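/- For all integers n ≥ 1 and r ≥ 1, 𝓗^{(r)}_0(0) = η_r; equivalently, (1/r)·∑_{j=1}^{r} 𝔰_j·(∂H^{(r)}/∂y_j)(𝔰_1,…,𝔰_r) = η_r holds in ℚ[α_1,…,α_n]. -/

import Mathlib

/-!
Setting: in `MvPolynomial (Fin n) ℚ`, `esymm` is the elementary symmetric polynomial `𝔰_r`,
`hsymm` is the complete homogeneous symmetric polynomial `η_r`, and `psum` is the power sum
`p_r`.  The polynomial `H = H^{(r)} ∈ ℚ[y₁,…,y_r]` is characterized by the hypothesis that
`p_r = H(e₁,…,e_r)` holds in any number `N ≥ r` of variables.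
-/

noncomputable section

open MvPolynomial

namespace SQ

/-!
Write `E(t) = ∑ (-1)ᵏ eₖ tᵏ`, so that `∑ ηₖ tᵏ = 1 / E` and, by Newton's identities,
`∑_{k ≥ 1} pₖ tᵏ = -t E' / E`. Regard the `eₖ` as independent variables and apply the Euler
derivation `D = ∑ eⱼ ∂/∂eⱼ` coefficientwise. Since `D E = E - 1`,
`D (-t E' / E) = -t E' / E + t E' (E - 1) / E² = -t E' / E² = t (1 / E)'`,
and comparing coefficients of `tʳ` gives `D p_r = r η_r`.
-/

open scoped PowerSeries

section PowerSeries

variable {R A B : Type*} [CommRing R] [CommRing A] [Algebra R A] [CommRing B] [Algebra R B]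

/-- The extension of a derivation `D` of `A` to `A⟦X⟧` that applies `D` to every coefficient. -/
def coeffDerivation (D : Derivation R A A) : Derivation R A⟦X⟧ A⟦X⟧ :=
  Derivation.mk'
    { toFun f := PowerSeries.mk fun k => D (PowerSeries.coeff k f)
      map_add' f g := by ext; simp
      map_smul' c f := by ext; simp }
    fun f g => by
      ext k
      simp only [LinearMap.coe_mk, AddHom.coe_mk, PowerSeries.coeff_mk, smul_eq_mul, map_add,
        mul_comm g, PowerSeries.coeff_mul, map_sum, Derivation.leibniz, ← Finset.sum_add_distrib]
      exact Finset.sum_congr rfl fun p _ => by ring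

@[simp]
lemma coeff_coeffDerivation (D : Derivation R A A) (f : A⟦X⟧) (k : ℕ) :
    PowerSeries.coeff k (coeffDerivation D f) = D (PowerSeries.coeff k f) := by
  simp [coeffDerivation]

lemma coeffDerivation_X (D : Derivation R A A) : coeffDerivation D (PowerSeries.X : A⟦X⟧) = 0 := by
  ext k
  simp [PowerSeries.coeff_X, apply_ite D]

lemma coeffDerivation_derivative (D : Derivation R A A) (f : A⟦X⟧) :
    coeffDerivation D (PowerSeries.derivative A f) =
      PowerSeries.derivative A (coeffDerivation D f) := by
  ext k
  simp [PowerSeries.coeff_derivative, mul_comm]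

lemma derivative_right_inverse {E F : A⟦X⟧} (hEF : E * F = 1) :
    PowerSeries.derivative A F = -(F ^ 2 * PowerSeries.derivative A E) := by
  have h : PowerSeries.derivative A (E * F) = 0 := by rw [hEF, PowerSeries.derivative_one]
  rw [Derivation.leibniz, smul_eq_mul, smul_eq_mul] at h
  linear_combination F * h - PowerSeries.derivative A F * hEF

/-- The series `-t E' / E`, where `F` stands for the inverse `1 / E`. By Newton's identities this is
the generating series of the power sums when `E = ∑ (-1)ᵏ eₖ tᵏ`. -/
def negXLogDeriv (E F : A⟦X⟧) : A⟦X⟧ :=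
  -(PowerSeries.X * PowerSeries.derivative A E * F)

lemma coeffDerivation_negXLogDeriv (D : Derivation R A A) {E F : A⟦X⟧} (hEF : E * F = 1)
    (hD : coeffDerivation D E = E - 1) :
    coeffDerivation D (negXLogDeriv E F) =
      PowerSeries.X * PowerSeries.derivative A F := by
  have hDF : coeffDerivation D F = F ^ 2 - F := by
    have h := congrArg (coeffDerivation D) hEF
    simp only [Derivation.leibniz, hD, smul_eq_mul, Derivation.map_one_eq_zero] at h
    linear_combination F * h - (coeffDerivation D F + F) * hEF
  simp only [negXLogDeriv, map_neg, Derivation.leibniz, coeffDerivation_X,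
    coeffDerivation_derivative, hD, hDF, derivative_right_inverse hEF, map_sub,
    PowerSeries.derivative_one, smul_eq_mul]
  ring

lemma X_pow_dvd_X_mul_derivative {n : ℕ} {f : A⟦X⟧} (hf : PowerSeries.X ^ n ∣ f) :
    PowerSeries.X ^ n ∣ PowerSeries.X * PowerSeries.derivative A f := by
  rw [PowerSeries.X_pow_dvd_iff] at hf ⊢
  rintro (_ | m) hm
  · simp
  · rw [PowerSeries.coeff_succ_X_mul, PowerSeries.coeff_derivative, hf _ hm, zero_mul]

lemma dvd_sub_of_mul_eq_one {d a a' b b' : A} (hab : a * b = 1) (hab' : a' * b' = 1)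
    (hd : d ∣ a - a') : d ∣ b - b' := by
  rw [show b - b' = -(b * b') * (a - a') by linear_combination b' * hab - b * hab']
  exact hd.mul_left _

lemma X_pow_dvd_negXLogDeriv_sub {n : ℕ} {E E' F F' : A⟦X⟧} (hEF : E * F = 1)
    (hEF' : E' * F' = 1) (h : PowerSeries.X ^ n ∣ E - E') :
    PowerSeries.X ^ n ∣ negXLogDeriv E F - negXLogDeriv E' F' := by
  have hX := X_pow_dvd_X_mul_derivative h
  have hF := dvd_sub_of_mul_eq_one hEF hEF' h
  have hsplit : negXLogDeriv E F - negXLogDeriv E' F' =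
      -(PowerSeries.X * PowerSeries.derivative A (E - E') * F +
        PowerSeries.X * PowerSeries.derivative A E' * (F - F')) := by
    rw [negXLogDeriv, negXLogDeriv, map_sub]
    ring
  rw [hsplit, dvd_neg]
  exact (hX.mul_right F).add (hF.mul_left _)

lemma one_sub_mul_mk_pow (a : A) :
    (1 - PowerSeries.C a * PowerSeries.X) * PowerSeries.mk (fun m => a ^ m) = 1 := by
  ext (_ | k)
  · simp
  · simp [sub_mul, mul_assoc, PowerSeries.coeff_succ_X_mul, pow_succ', PowerSeries.coeff_one]

lemma coeff_mapAlgHom (φ : A →ₐ[R] B) (f : A⟦X⟧) (k : ℕ) :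
    PowerSeries.coeff k (PowerSeries.mapAlgHom φ f) = φ (PowerSeries.coeff k f) := by
  simp [PowerSeries.mapAlgHom_apply]

lemma mapAlgHom_derivative (φ : A →ₐ[R] B) (f : A⟦X⟧) :
    PowerSeries.mapAlgHom φ (PowerSeries.derivative A f) =
      PowerSeries.derivative B (PowerSeries.mapAlgHom φ f) := by
  ext
  simp [PowerSeries.coeff_derivative, coeff_mapAlgHom]

lemma mapAlgHom_negXLogDeriv (φ : A →ₐ[R] B) (E F : A⟦X⟧) :
    PowerSeries.mapAlgHom φ (negXLogDeriv E F) =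
      negXLogDeriv (PowerSeries.mapAlgHom φ E) (PowerSeries.mapAlgHom φ F) := by
  rw [negXLogDeriv, map_neg, map_mul, map_mul, mapAlgHom_derivative, PowerSeries.mapAlgHom_apply φ
    PowerSeries.X, PowerSeries.map_X, negXLogDeriv]

lemma coeff_eq_of_X_pow_dvd_sub {f g : A⟦X⟧} {n k : ℕ} (h : PowerSeries.X ^ n ∣ f - g)
    (hk : k < n) : PowerSeries.coeff k f = PowerSeries.coeff k g := by
  rw [← sub_eq_zero, ← map_sub]
  exact PowerSeries.X_pow_dvd_iff.mp h k hk

end PowerSeries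

section AltSeries

variable {R A B : Type*} [CommRing R] [CommRing A] [Algebra R A] [CommRing B] [Algebra R B]

/-- The alternating generating series `∑ (-1)ᵏ aₖ tᵏ` of a sequence `a`, the shape in which
elementary symmetric polynomials satisfy `∑ (-1)ᵏ eₖ tᵏ = ∏ᵢ (1 - αᵢ t)`. -/
def altSeries (a : ℕ → A) : A⟦X⟧ :=
  PowerSeries.mk fun k => (-1) ^ k * a k

@[simp]
lemma coeff_altSeries (a : ℕ → A) (k : ℕ) :
    PowerSeries.coeff k (altSeries a) = (-1) ^ k * a k :=
  PowerSeries.coeff_mk _ _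

@[simp]
lemma constantCoeff_altSeries (a : ℕ → A) : PowerSeries.constantCoeff (altSeries a) = a 0 := by
  rw [← PowerSeries.coeff_zero_eq_constantCoeff_apply, coeff_altSeries, pow_zero, one_mul]

lemma mapAlgHom_altSeries (φ : A →ₐ[R] B) (a : ℕ → A) :
    PowerSeries.mapAlgHom φ (altSeries a) = altSeries (φ ∘ a) := by
  ext
  simp [coeff_mapAlgHom]

lemma X_pow_dvd_altSeries_sub {n : ℕ} {a b : ℕ → A} (h : ∀ k < n, a k = b k) :
    PowerSeries.X ^ n ∣ altSeries a - altSeries b := by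
  rw [PowerSeries.X_pow_dvd_iff]
  intro k hk
  simp [h k hk]

end AltSeries

section SymmetricPolynomials

variable (σ R : Type*) [Fintype σ] [CommRing R]

lemma altSeries_esymm_eq_prod :
    altSeries (esymm σ R) = ∏ i, (1 - PowerSeries.C (X i) * PowerSeries.X) := by
  ext1 k
  simp only [sub_eq_add_neg, ← neg_mul, ← map_neg, Finset.prod_one_add, Finset.prod_mul_distrib,
    ← map_prod, Finset.prod_const, map_sum, PowerSeries.coeff_C_mul_X_pow, coeff_altSeries, esymm,
    Finset.mul_sum, Finset.powersetCard_eq_filter, Finset.sum_filter]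
  refine Finset.sum_congr rfl fun t _ => ?_
  by_cases h : t.card = k
  · simp [h, Finset.prod_neg]
  · simp [h, Ne.symm h]

lemma mk_hsymm_eq_prod [DecidableEq σ] :
    PowerSeries.mk (hsymm σ R) = ∏ i, PowerSeries.mk fun m => (X i : MvPolynomial σ R) ^ m := by
  ext1 k
  simp only [PowerSeries.coeff_prod, PowerSeries.coeff_mk, hsymm]
  refine Finset.sum_bij (fun s _ => Multiset.toFinsupp s.1) (fun s _ => ?_)
    (fun _ _ _ _ h => Subtype.ext (Multiset.toFinsupp.injective h)) (fun f hf => ?_)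
    (fun s _ => ?_)
  · rw [Finset.mem_finsuppAntidiag]
    exact ⟨(Multiset.sum_count_eq_card fun i _ => Finset.mem_univ i).trans s.2,
      Finset.subset_univ _⟩
  · exact ⟨⟨Finsupp.toMultiset f, by simp_all [Finsupp.card_toMultiset, Finsupp.sum_fintype]⟩,
      Finset.mem_univ _, Finsupp.toMultiset_toFinsupp f⟩
  · rw [Finset.prod_multiset_map_count]
    exact Finset.prod_subset (Finset.subset_univ _) fun i _ hi => by simp_all

lemma altSeries_esymm_mul_mk_hsymm [DecidableEq σ] :
    altSeries (esymm σ R) * PowerSeries.mk (hsymm σ R) = 1 := by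
  simp only [altSeries_esymm_eq_prod, mk_hsymm_eq_prod, ← Finset.prod_mul_distrib,
    one_sub_mul_mk_pow, Finset.prod_const_one]

lemma sum_antidiagonal_esymm_mul_psum (k : ℕ) :
    ∑ a ∈ Finset.HasAntidiagonal.antidiagonal k, (-1) ^ a.1 * esymm σ R a.1 * psum σ R a.2 =
      (Fintype.card σ - k) * ((-1) ^ k * esymm σ R k) := by
  have hlast : ∑ a ∈ Finset.HasAntidiagonal.antidiagonal k with ¬ a.1 < k,
      (-1) ^ a.1 * esymm σ R a.1 * psum σ R a.2 =
        (-1) ^ k * esymm σ R k * (Fintype.card σ : MvPolynomial σ R) := by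
    simp
  have hsign : (-1 : MvPolynomial σ R) ^ k * (-1) ^ k = 1 := by
    rw [← mul_pow, neg_one_mul, neg_neg, one_pow]
  rw [← Finset.sum_filter_add_sum_filter_not _ (fun a => a.1 < k), hlast]
  have hnewton := mul_esymm_eq_sum σ R k
  set S := ∑ a ∈ Finset.HasAntidiagonal.antidiagonal k with a.1 < k,
    (-1) ^ a.1 * esymm σ R a.1 * psum σ R a.2
  rw [pow_succ] at hnewton
  linear_combination (-1) ^ k * hnewton - S * hsign

lemma altSeries_esymm_mul_mk_psum :
    altSeries (esymm σ R) * PowerSeries.mk (psum σ R) =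
      PowerSeries.C (Fintype.card σ : MvPolynomial σ R) * altSeries (esymm σ R) -
        PowerSeries.X * PowerSeries.derivative _ (altSeries (esymm σ R)) := by
  ext1 k
  rw [PowerSeries.coeff_mul, map_sub, PowerSeries.coeff_C_mul]
  simp only [coeff_altSeries, PowerSeries.coeff_mk, sum_antidiagonal_esymm_mul_psum]
  cases k with
  | zero => simp
  | succ k =>
    rw [PowerSeries.coeff_succ_X_mul, PowerSeries.coeff_derivative, coeff_altSeries]
    push_cast
    ring

lemma negXLogDeriv_altSeries_esymm [DecidableEq σ] :
    negXLogDeriv (altSeries (esymm σ R)) (PowerSeries.mk (hsymm σ R)) =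
      PowerSeries.mk (psum σ R) - PowerSeries.C (Fintype.card σ : MvPolynomial σ R) := by
  set P := PowerSeries.mk (psum σ R)
  set c := PowerSeries.C (Fintype.card σ : MvPolynomial σ R)
  set F := PowerSeries.mk (hsymm σ R)
  have hP : altSeries (esymm σ R) * P = _ := altSeries_esymm_mul_mk_psum σ R
  rw [negXLogDeriv]
  linear_combination (P - c) * altSeries_esymm_mul_mk_hsymm σ R - F * hP

lemma coeff_negXLogDeriv_altSeries_esymm [DecidableEq σ] {k : ℕ} (hk : k ≠ 0) :
    PowerSeries.coeff k
      (negXLogDeriv (altSeries (esymm σ R)) (PowerSeries.mk (hsymm σ R))) = psum σ R k := by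
  rw [negXLogDeriv_altSeries_esymm, map_sub, PowerSeries.coeff_mk, PowerSeries.coeff_C,
    if_neg hk, sub_zero]

end SymmetricPolynomials

section EulerDerivation

variable (R ι : Type*) [CommRing R] [Fintype ι]

/-- The Euler derivation `∑ⱼ yⱼ ∂/∂yⱼ`, where every variable has weight one. -/
def eulerDerivation : Derivation R (MvPolynomial ι R) (MvPolynomial ι R) :=
  ∑ j, (X j : MvPolynomial ι R) • pderiv j

variable {R ι}

lemma eulerDerivation_apply (f : MvPolynomial ι R) :
    eulerDerivation R ι f = ∑ j, X j * pderiv j f := by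
  rw [eulerDerivation, ← Derivation.coeFnAddMonoidHom_apply, map_sum, Finset.sum_apply]
  rfl

lemma eulerDerivation_X (i : ι) : eulerDerivation R ι (X i) = X i := by
  classical
  simp [eulerDerivation_apply, pderiv_X, Pi.single_apply]

end EulerDerivation

section Universal

variable (R : Type*) [CommRing R] (r : ℕ)

/-- The sequence `1, y₁, …, y_r, 0, 0, …` of independent elementary symmetric polynomials
`e₀, e₁, …`, truncated after `e_r`. The variable `y_{k+1}` is `X k`. -/
def genericEsymm : ℕ → MvPolynomial (Fin r) R
  | 0 => 1
  | k + 1 => if h : k < r then X ⟨k, h⟩ else 0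

/-- The evaluation `yⱼ ↦ eⱼ(α)` at the elementary symmetric polynomials in variables `α` indexed
by `σ`. -/
def esymmEval (σ : Type*) [Fintype σ] : MvPolynomial (Fin r) R →ₐ[R] MvPolynomial σ R :=
  aeval fun j : Fin r => esymm σ R ((j : ℕ) + 1)

/-- The series `1 / E` for the generic series `E = ∑ (-1)ᵏ eₖ tᵏ`. -/
def genericHsymmSeries : (MvPolynomial (Fin r) R)⟦X⟧ :=
  PowerSeries.invOfUnit (altSeries (genericEsymm R r)) 1

/-- The series `-t E' / E` for the generic series `E = ∑ (-1)ᵏ eₖ tᵏ`; its coefficient of `tʳ` is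
`H⁽ʳ⁾`. -/
def genericPsumSeries : (MvPolynomial (Fin r) R)⟦X⟧ :=
  negXLogDeriv (altSeries (genericEsymm R r)) (genericHsymmSeries R r)

lemma altSeries_genericEsymm_mul_genericHsymmSeries :
    altSeries (genericEsymm R r) * genericHsymmSeries R r = 1 :=
  PowerSeries.mul_invOfUnit _ _ (constantCoeff_altSeries _)

variable {R r}

lemma coeffDerivation_eulerDerivation_altSeries_genericEsymm :
    coeffDerivation (eulerDerivation R (Fin r)) (altSeries (genericEsymm R r)) =
      altSeries (genericEsymm R r) - 1 := by
  ext (_ | k)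
  · simp [genericEsymm]
  · by_cases hk : k < r <;>
      simp [genericEsymm, hk, Derivation.leibniz_pow, eulerDerivation_X, PowerSeries.coeff_one]

lemma eulerDerivation_coeff_genericPsumSeries (k : ℕ) :
    eulerDerivation R (Fin r) (PowerSeries.coeff k (genericPsumSeries R r)) =
      k * PowerSeries.coeff k (genericHsymmSeries R r) := by
  rw [← coeff_coeffDerivation, genericPsumSeries, coeffDerivation_negXLogDeriv _
    (altSeries_genericEsymm_mul_genericHsymmSeries R r)
    coeffDerivation_eulerDerivation_altSeries_genericEsymm]
  cases k with
  | zero => simp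
  | succ k =>
    rw [PowerSeries.coeff_succ_X_mul, PowerSeries.coeff_derivative, Nat.cast_succ, mul_comm]

section Evaluation

variable {σ : Type*} [Fintype σ]

lemma esymmEval_genericEsymm {k : ℕ} (hk : k ≤ r) :
    esymmEval R r σ (genericEsymm R r k) = esymm σ R k := by
  cases k with
  | zero => simp [genericEsymm]
  | succ k => simp [genericEsymm, esymmEval, Nat.lt_of_succ_le hk]

lemma X_pow_dvd_mapAlgHom_altSeries_genericEsymm_sub :
    PowerSeries.X ^ (r + 1) ∣
      PowerSeries.mapAlgHom (esymmEval R r σ) (altSeries (genericEsymm R r)) -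
        altSeries (esymm σ R) := by
  rw [mapAlgHom_altSeries]
  exact X_pow_dvd_altSeries_sub fun k hk => esymmEval_genericEsymm (Nat.le_of_lt_succ hk)

lemma mapAlgHom_altSeries_genericEsymm_mul :
    PowerSeries.mapAlgHom (esymmEval R r σ) (altSeries (genericEsymm R r)) *
      PowerSeries.mapAlgHom (esymmEval R r σ) (genericHsymmSeries R r) = 1 := by
  rw [← map_mul, altSeries_genericEsymm_mul_genericHsymmSeries, map_one]

lemma esymmEval_coeff_genericHsymmSeries [DecidableEq σ] {k : ℕ} (hk : k ≤ r) :
    esymmEval R r σ (PowerSeries.coeff k (genericHsymmSeries R r)) = hsymm σ R k := by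
  rw [← PowerSeries.coeff_mk k (hsymm σ R), ← coeff_mapAlgHom]
  exact coeff_eq_of_X_pow_dvd_sub (dvd_sub_of_mul_eq_one
    mapAlgHom_altSeries_genericEsymm_mul (altSeries_esymm_mul_mk_hsymm σ R)
    X_pow_dvd_mapAlgHom_altSeries_genericEsymm_sub) (Nat.lt_succ_of_le hk)

lemma esymmEval_coeff_genericPsumSeries {k : ℕ} (hk₀ : k ≠ 0) (hk : k ≤ r) :
    esymmEval R r σ (PowerSeries.coeff k (genericPsumSeries R r)) = psum σ R k := by
  classical
  rw [← coeff_negXLogDeriv_altSeries_esymm σ R hk₀, ← coeff_mapAlgHom, genericPsumSeries,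
    mapAlgHom_negXLogDeriv]
  exact coeff_eq_of_X_pow_dvd_sub (X_pow_dvd_negXLogDeriv_sub
    mapAlgHom_altSeries_genericEsymm_mul (altSeries_esymm_mul_mk_hsymm σ R)
    X_pow_dvd_mapAlgHom_altSeries_genericEsymm_sub) (Nat.lt_succ_of_le hk)

end Evaluation

lemma esymmEval_injective {τ : Type*} [Fintype τ] (hr : r ≤ Fintype.card τ) :
    Function.Injective (esymmEval R r τ) := by
  intro f g hfg
  refine esymmAlgHom_injective R hr (Subtype.ext ?_)
  rwa [esymmAlgHom_apply, esymmAlgHom_apply]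

lemma eq_coeff_genericPsumSeries {τ : Type*} [Fintype τ] (hr : r ≤ Fintype.card τ) (hr₀ : r ≠ 0)
    {H : MvPolynomial (Fin r) R} (hH : esymmEval R r τ H = psum τ R r) :
    H = PowerSeries.coeff r (genericPsumSeries R r) :=
  esymmEval_injective hr (hH.trans (esymmEval_coeff_genericPsumSeries hr₀ le_rfl).symm)

end Universal

theorem statement6_general {R σ τ : Type*} [CommRing R] [Fintype σ] [DecidableEq σ] [Fintype τ]
    {r : ℕ} (hr : r ≤ Fintype.card τ) {H : MvPolynomial (Fin r) R}
    (hH : aeval (fun j : Fin r => esymm τ R ((j : ℕ) + 1)) H = psum τ R r) :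
    ∑ j : Fin r, esymm σ R ((j : ℕ) + 1) *
        aeval (fun k : Fin r => esymm σ R ((k : ℕ) + 1)) (pderiv j H) =
      r * hsymm σ R r := by
  obtain rfl | hr₀ := eq_or_ne r 0
  · simp
  calc
    _ = esymmEval R r σ (eulerDerivation R (Fin r) H) := by
      simp [eulerDerivation_apply, esymmEval]
    _ = esymmEval R r σ (r * PowerSeries.coeff r (genericHsymmSeries R r)) := by
      rw [eq_coeff_genericPsumSeries hr hr₀ hH, eulerDerivation_coeff_genericPsumSeries]
    _ = r * hsymm σ R r := by
      rw [map_mul, map_natCast, esymmEval_coeff_genericHsymmSeries le_rfl]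

/-- `𝓗^{(r)}_0(0) = η_r`, in the explicit form
`(1/r)·∑_{j=1}^{r} 𝔰_j·(∂H^{(r)}/∂y_j)(𝔰₁,…,𝔰_r) = η_r` in `ℚ[α₁,…,αₙ]`. -/
theorem statement6 (n : ℕ) (hn : 1 ≤ n) (r : ℕ) (hr : 1 ≤ r)
    (H : MvPolynomial (Fin r) ℚ)
    (hH : ∀ N : ℕ, r ≤ N →
        MvPolynomial.aeval (fun j : Fin r => esymm (Fin N) ℚ ((j : ℕ) + 1)) H
          = psum (Fin N) ℚ r) :
    C ((r : ℚ))⁻¹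
        * ∑ j : Fin r,
            esymm (Fin n) ℚ ((j : ℕ) + 1)
              * MvPolynomial.aeval (fun k : Fin r => esymm (Fin n) ℚ ((k : ℕ) + 1))
                  (pderiv j H)
      = hsymm (Fin n) ℚ r := by
  rw [statement6_general (Fintype.card_fin r).ge (hH r le_rfl), ← C_eq_coe_nat, ← mul_assoc,
    ← C_mul, inv_mul_cancel₀ (by positivity), C_1, one_mul]

end SQ
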